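/- arXiv:1810.11749 — 2 statements merged into one kernel-verified Lean document; each statement's English description precedes it below -/
import Mathlib

section
/- Let N₁, N₂, m, r be positive integers and let γ ≥ 1 be a real number. Set s := 100·γ⁴·r and t := 800·γ¹²·s, and assume t + s + r ≤ min{N₁, N₂}. Suppose the linear map 𝓐 : ℝ^{N₁×N₂} → ℝ^m satisfies the modified rank-restricted isometry property of order t + s + r with constants 0 < α ≤ β such that β/α ≤ γ. Let X ∈ ℝ^{N₁×N₂} with rank(X) ≤ r and let y := 𝓐(X). Let (Xₙ)_{n≥0} be any sequence of matrices such that X₀ = 0 and, for every n ≥ 0, there is a matrix Wₙ which is a best rank-t approximation of 𝓐*(sgn(y − 𝓐(Xₙ))) such that X_{n+1} is a best rank-s approximation of Xₙ + μₙ·Wₙ, where μₙ := ‖y − 𝓐(Xₙ)‖₁ / ‖Wₙ‖_F² if Wₙ ≠ 0 and μₙ := 0 otherwise. Then, with ρ := 1 − (3 − 2√2)/(10·γ²) (which lies in (0,1)), one has ‖X − Xₙ‖_F ≤ ρⁿ·‖X‖_F for all n ≥ 0; in particular, the sequence (Xₙ) converges to X. -/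
noncomputable def frobNorm {N₁ N₂ : ℕ} (Z : Matrix (Fin N₁) (Fin N₂) ℝ) : ℝ :=
  Real.sqrt (∑ i, ∑ j, (Z i j) ^ 2)

def frobInner {N₁ N₂ : ℕ} (A B : Matrix (Fin N₁) (Fin N₂) ℝ) : ℝ :=
  ∑ i, ∑ j, A i j * B i j

def l1norm {m : ℕ} (v : Fin m → ℝ) : ℝ := ∑ i, |v i|

noncomputable def sgnVec {m : ℕ} (v : Fin m → ℝ) : Fin m → ℝ := fun i => Real.sign (v i)

def IsBestRankApprox {N₁ N₂ : ℕ} (k : ℕ) (Z H : Matrix (Fin N₁) (Fin N₂) ℝ) : Prop :=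
  H.rank ≤ k ∧
    ∀ W : Matrix (Fin N₁) (Fin N₂) ℝ, W.rank ≤ k → frobNorm (Z - H) ≤ frobNorm (Z - W)
open scoped Classical

/-!
The difficulty is that thresholding is not nonexpansive. For a best rank-`k` approximation `H` of
`Z`, the residual `Z - H` is orthogonal to the columns of `H`, and exchanging a unit vector `e` in
the column space of `H` for a unit vector `u` orthogonal to it shows `‖uᵀ(Z - H)‖ ≤ ‖eᵀH‖`. Summing
over an orthonormal basis of the vectors `e` orthogonal to the columns of `X` gives
`(k - rank X) ‖uᵀ(Z - H)‖² ≤ ‖X - H‖²`. Hence the inner product of the residual with a matrix of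
small rank is small as soon as `k` is large, with no reference to singular values. This is used
twice: thresholding to rank `s` loses only a factor close to `1` in the distance to `X`, and the
rank-`t` truncation `W` of the subgradient `𝓐*(sgn(𝓐 M))` at `M = X - Xₙ` satisfies
`⟨M, W⟩ ≥ (1 - δ) ‖𝓐 M‖₁`. As `‖M‖ ‖W‖ ≤ γ ‖𝓐 M‖₁` by the isometry property, the step length
`‖𝓐 M‖₁ / ‖W‖²` contracts `‖M‖²` by the factor `1 - (1 - 2 δ) / γ²`, which outweighs the loss from
thresholding.
-/

open Matrix Module

section Frobenius

variable {n p : ℕ}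

/-- The entries of a matrix as a Euclidean vector. It carries `frobInner` and `frobNorm` to the
Euclidean inner product and norm, which gives access to the theory of inner product spaces without
choosing one of the competing norms on `Matrix` as an instance. -/
noncomputable def matrixToEuclidean :
    Matrix (Fin n) (Fin p) ℝ ≃ₗ[ℝ] EuclideanSpace ℝ (Fin n × Fin p) :=
  (LinearEquiv.curry ℝ ℝ (Fin n) (Fin p)).symm ≪≫ₗ (WithLp.linearEquiv 2 ℝ _).symm

lemma matrixToEuclidean_apply (A : Matrix (Fin n) (Fin p) ℝ) (x : Fin n × Fin p) :
    matrixToEuclidean A x = A x.1 x.2 := rfl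

lemma inner_matrixToEuclidean (A B : Matrix (Fin n) (Fin p) ℝ) :
    inner ℝ (matrixToEuclidean A) (matrixToEuclidean B) = frobInner A B := by
  simp [matrixToEuclidean_apply, frobInner, PiLp.inner_apply, Fintype.sum_prod_type, mul_comm]

lemma norm_matrixToEuclidean (A : Matrix (Fin n) (Fin p) ℝ) :
    ‖matrixToEuclidean A‖ = frobNorm A := by
  simp [matrixToEuclidean_apply, frobNorm, EuclideanSpace.norm_eq, Fintype.sum_prod_type]

lemma frobNorm_nonneg (A : Matrix (Fin n) (Fin p) ℝ) : 0 ≤ frobNorm A :=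
  Real.sqrt_nonneg _

lemma frobNorm_eq_zero {A : Matrix (Fin n) (Fin p) ℝ} : frobNorm A = 0 ↔ A = 0 := by
  rw [← norm_matrixToEuclidean, norm_eq_zero, LinearEquiv.map_eq_zero_iff]

lemma frobNorm_neg (A : Matrix (Fin n) (Fin p) ℝ) : frobNorm (-A) = frobNorm A := by
  rw [← norm_matrixToEuclidean, map_neg, norm_neg, norm_matrixToEuclidean]

lemma frobInner_self (A : Matrix (Fin n) (Fin p) ℝ) : frobInner A A = frobNorm A ^ 2 := by
  rw [← inner_matrixToEuclidean, real_inner_self_eq_norm_sq, norm_matrixToEuclidean]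

lemma frobInner_comm (A B : Matrix (Fin n) (Fin p) ℝ) : frobInner A B = frobInner B A := by
  simp only [← inner_matrixToEuclidean, real_inner_comm]

lemma frobInner_zero_left (A : Matrix (Fin n) (Fin p) ℝ) : frobInner 0 A = 0 := by
  rw [← inner_matrixToEuclidean, map_zero, inner_zero_left]

lemma frobInner_sub_left (A B C : Matrix (Fin n) (Fin p) ℝ) :
    frobInner (A - B) C = frobInner A C - frobInner B C := by
  simp only [← inner_matrixToEuclidean, map_sub, inner_sub_left]

lemma frobInner_sub_right (A B C : Matrix (Fin n) (Fin p) ℝ) :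
    frobInner A (B - C) = frobInner A B - frobInner A C := by
  simp only [← inner_matrixToEuclidean, map_sub, inner_sub_right]

lemma frobInner_smul_right (c : ℝ) (A B : Matrix (Fin n) (Fin p) ℝ) :
    frobInner A (c • B) = c * frobInner A B := by
  simp only [← inner_matrixToEuclidean, map_smul, real_inner_smul_right]

lemma frobNorm_smul_sq (c : ℝ) (A : Matrix (Fin n) (Fin p) ℝ) :
    frobNorm (c • A) ^ 2 = c ^ 2 * frobNorm A ^ 2 := by
  rw [← norm_matrixToEuclidean, map_smul, norm_smul, mul_pow, Real.norm_eq_abs, sq_abs,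
    norm_matrixToEuclidean]

lemma frobNorm_add_sq (A B : Matrix (Fin n) (Fin p) ℝ) :
    frobNorm (A + B) ^ 2 = frobNorm A ^ 2 + 2 * frobInner A B + frobNorm B ^ 2 := by
  simp only [← norm_matrixToEuclidean, ← inner_matrixToEuclidean, map_add, norm_add_sq_real]

lemma frobNorm_sub_sq (A B : Matrix (Fin n) (Fin p) ℝ) :
    frobNorm (A - B) ^ 2 = frobNorm A ^ 2 - 2 * frobInner A B + frobNorm B ^ 2 := by
  simp only [← norm_matrixToEuclidean, ← inner_matrixToEuclidean, map_sub, norm_sub_sq_real]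

lemma frobInner_sq_le (A B : Matrix (Fin n) (Fin p) ℝ) :
    frobInner A B ^ 2 ≤ frobNorm A ^ 2 * frobNorm B ^ 2 := by
  rw [← mul_pow, ← inner_matrixToEuclidean, ← norm_matrixToEuclidean, ← norm_matrixToEuclidean]
  exact sq_le_sq' (neg_le_of_abs_le (abs_real_inner_le_norm _ _)) (real_inner_le_norm _ _)

lemma frobInner_eq_trace (A B : Matrix (Fin n) (Fin p) ℝ) : frobInner A B = (Aᵀ * B).trace := by
  simp only [frobInner, trace, diag, mul_apply, transpose_apply]
  exact Finset.sum_comm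

lemma frobInner_mul_left {q : ℕ} (P : Matrix (Fin n) (Fin q) ℝ) (A : Matrix (Fin q) (Fin p) ℝ)
    (B : Matrix (Fin n) (Fin p) ℝ) : frobInner (P * A) B = frobInner A (Pᵀ * B) := by
  simp only [frobInner_eq_trace, transpose_mul, Matrix.mul_assoc]

lemma frobInner_vecMulVec (u : Fin n → ℝ) (v : Fin p → ℝ) (B : Matrix (Fin n) (Fin p) ℝ) :
    frobInner (vecMulVec u v) B = v ⬝ᵥ (u ᵥ* B) := by
  simp only [frobInner_eq_trace, transpose_vecMulVec, vecMulVec_mul, trace_vecMulVec]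

lemma frobNorm_vecMulVec_sq {u : Fin n → ℝ} (hu : u ⬝ᵥ u = 1) (v : Fin p → ℝ) :
    frobNorm (vecMulVec u v) ^ 2 = v ⬝ᵥ v := by
  rw [← frobInner_self, frobInner_vecMulVec, vecMul_vecMulVec, hu, one_smul]

lemma tendsto_of_frobNorm_sub_tendsto_zero {ι : Type*} {l : Filter ι}
    {F : ι → Matrix (Fin n) (Fin p) ℝ} {X : Matrix (Fin n) (Fin p) ℝ}
    (h : Filter.Tendsto (fun k => frobNorm (X - F k)) l (nhds 0)) :
    Filter.Tendsto F l (nhds X) := by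
  have hφ : Filter.Tendsto (fun k => matrixToEuclidean (F k)) l (nhds (matrixToEuclidean X)) :=
    tendsto_iff_norm_sub_tendsto_zero.2 <| h.congr fun k => by
      rw [norm_sub_rev, ← map_sub, norm_matrixToEuclidean]
  have hcont :=
    (matrixToEuclidean (n := n) (p := p)).symm.toLinearMap.continuous_of_finiteDimensional
  simpa [Function.comp_def] using (hcont.tendsto _).comp hφ

end Frobenius

section MatrixRank

variable {ι κ K : Type*} [Fintype κ] [Field K]

lemma matrix_rank_add_le (A B : Matrix ι κ K) : (A + B).rank ≤ A.rank + B.rank := by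
  rw [rank, mulVecLin_add]
  exact (Submodule.finrank_mono (LinearMap.range_add_le _ _)).trans
    (Submodule.finrank_add_le_finrank_add_finrank _ _)

lemma matrix_rank_sub_le (A B : Matrix ι κ K) : (A - B).rank ≤ A.rank + B.rank := by
  have hneg : -B = B * (-1 : Matrix κ κ K) := by rw [Matrix.mul_neg, Matrix.mul_one]
  rw [sub_eq_add_neg, hneg]
  exact (matrix_rank_add_le _ _).trans (Nat.add_le_add_left (rank_mul_le_left _ _) _)

variable [Fintype ι]

lemma rank_le_finrank_inf_ker_add_rank (H X : Matrix ι κ K) :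
    H.rank ≤ finrank K ↥(LinearMap.range H.mulVecLin ⊓ LinearMap.ker Xᵀ.mulVecLin) + X.rank := by
  have hinf := Submodule.finrank_sup_add_finrank_inf_eq (LinearMap.range H.mulVecLin)
    (LinearMap.ker Xᵀ.mulVecLin)
  have hsup := Submodule.finrank_le (LinearMap.range H.mulVecLin ⊔ LinearMap.ker Xᵀ.mulVecLin)
  have hker := LinearMap.finrank_range_add_finrank_ker Xᵀ.mulVecLin
  have hX : finrank K (LinearMap.range Xᵀ.mulVecLin) = X.rank := rank_transpose X
  rw [rank]
  omega

lemma rank_sub_vecMulVec_vecMul_lt {H : Matrix ι κ K} {e : ι → K}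
    (he : e ⬝ᵥ e = 1) (heH : e ∈ LinearMap.range H.mulVecLin) :
    (H - vecMulVec e (e ᵥ* H)).rank < H.rank := by
  have happly : ∀ x, (H - vecMulVec e (e ᵥ* H)) *ᵥ x = H *ᵥ x - (e ⬝ᵥ (H *ᵥ x)) • e := fun x => by
    rw [sub_mulVec, vecMulVec_mulVec, dotProduct_mulVec]
    simp
  refine Submodule.finrank_lt_finrank_of_lt (SetLike.lt_iff_le_and_exists.2 ⟨?_, e, heH, ?_⟩)
  · rintro _ ⟨x, rfl⟩
    rw [mulVecLin_apply, happly]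
    exact Submodule.sub_mem _ ⟨x, rfl⟩ (Submodule.smul_mem _ _ heH)
  · rintro ⟨x, hx⟩
    have hzero : e ⬝ᵥ ((H - vecMulVec e (e ᵥ* H)) *ᵥ x) = 0 := by
      rw [happly, dotProduct_sub, dotProduct_smul, he, smul_eq_mul, mul_one, sub_self]
    rw [mulVecLin_apply] at hx
    rw [hx, he] at hzero
    exact one_ne_zero hzero

end MatrixRank

section OrthonormalColumns

lemma exists_orthonormal_columns {ι : Type*} [Fintype ι] (V : Submodule ℝ (ι → ℝ)) :
    ∃ E : Matrix ι (Fin (finrank ℝ V)) ℝ, Eᵀ * E = 1 ∧ LinearMap.range E.mulVecLin = V := by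
  let V' : Submodule ℝ (EuclideanSpace ℝ ι) :=
    V.map (WithLp.linearEquiv 2 ℝ (ι → ℝ)).symm.toLinearMap
  have hdim : finrank ℝ V' = finrank ℝ V := LinearEquiv.finrank_map_eq _ V
  let b : OrthonormalBasis (Fin (finrank ℝ V)) ℝ V' :=
    (stdOrthonormalBasis ℝ V').reindex (finCongr hdim)
  let E : Matrix ι (Fin (finrank ℝ V)) ℝ := of fun i j => (b j : EuclideanSpace ℝ ι) i
  have hE : Eᵀ * E = 1 := by
    ext i j
    simpa [E, mul_apply, one_apply, PiLp.inner_apply, mul_comm] using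
      orthonormal_iff_ite.1 b.orthonormal i j
  have hcol : ∀ j, E.col j ∈ V := fun j => by
    obtain ⟨v, hv, hvj⟩ := (b j).2
    have : E.col j = v := funext fun i => (congrFun (congrArg WithLp.ofLp hvj) i).symm
    rwa [this]
  have hle : LinearMap.range E.mulVecLin ≤ V := by
    rw [range_mulVecLin, Submodule.span_le]
    exact Set.range_subset_iff.2 hcol
  refine ⟨E, hE, Submodule.eq_of_le_of_finrank_eq hle ?_⟩
  rw [← rank, ← rank_transpose_mul_self, hE, rank_one, Fintype.card_fin]

section

variable {ι κ δ R : Type*} [CommRing R] {E : Matrix ι δ R}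

lemma col_mem_range_mulVecLin [Fintype δ] (j : δ) : E.col j ∈ LinearMap.range E.mulVecLin := by
  rw [range_mulVecLin]
  exact Submodule.subset_span ⟨j, rfl⟩

variable [Fintype ι] [DecidableEq δ]

lemma col_dotProduct_self (hE : Eᵀ * E = 1) (j : δ) : E.col j ⬝ᵥ E.col j = 1 :=
  (congrFun (congrFun hE j) j).trans (one_apply_eq j)

lemma mul_transpose_mul_of_range_le [Fintype δ] [Fintype κ] (hE : Eᵀ * E = 1)
    {M : Matrix ι κ R} (hM : LinearMap.range M.mulVecLin ≤ LinearMap.range E.mulVecLin) :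
    E * (Eᵀ * M) = M := by
  refine ext_of_mulVec_single fun j => ?_
  obtain ⟨w, hw⟩ := hM ⟨Pi.single j 1, rfl⟩
  simp only [mulVecLin_apply] at hw
  simp only [← mulVec_mulVec, ← hw]
  rw [mulVec_mulVec w, hE, one_mulVec]

end

variable {n p d : ℕ} {E : Matrix (Fin n) (Fin d) ℝ}

lemma frobNorm_sub_mul_transpose_mul_sq (hE : Eᵀ * E = 1) (M : Matrix (Fin n) (Fin p) ℝ) :
    frobNorm (M - E * (Eᵀ * M)) ^ 2 = frobNorm M ^ 2 - frobNorm (Eᵀ * M) ^ 2 := by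
  have hnorm : frobNorm (E * (Eᵀ * M)) ^ 2 = frobNorm (Eᵀ * M) ^ 2 := by
    rw [← frobInner_self, frobInner_mul_left, ← Matrix.mul_assoc, hE, Matrix.one_mul,
      frobInner_self]
  rw [frobNorm_sub_sq, frobInner_comm, frobInner_mul_left, frobInner_self, hnorm]
  ring

lemma frobNorm_transpose_mul_sq_le (hE : Eᵀ * E = 1) (M : Matrix (Fin n) (Fin p) ℝ) :
    frobNorm (Eᵀ * M) ^ 2 ≤ frobNorm M ^ 2 := by
  rw [← sub_nonneg, ← frobNorm_sub_mul_transpose_mul_sq hE]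
  positivity

lemma frobNorm_sub_mul_transpose_mul_sq_le (hE : Eᵀ * E = 1) (M : Matrix (Fin n) (Fin p) ℝ) :
    frobNorm (M - E * (Eᵀ * M)) ^ 2 ≤ frobNorm M ^ 2 := by
  rw [frobNorm_sub_mul_transpose_mul_sq hE]
  exact sub_le_self _ (sq_nonneg _)

lemma frobNorm_transpose_mul_sq_eq_sum (E : Matrix (Fin n) (Fin d) ℝ)
    (M : Matrix (Fin n) (Fin p) ℝ) :
    frobNorm (Eᵀ * M) ^ 2 = ∑ j, (E.col j ᵥ* M) ⬝ᵥ (E.col j ᵥ* M) := by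
  rw [← frobInner_self]
  rfl

lemma frobInner_sq_le_rank_mul {M N : Matrix (Fin n) (Fin p) ℝ} {d c : ℝ}
    (h : ∀ u ∈ LinearMap.range M.mulVecLin, u ⬝ᵥ u = 1 → d * ((u ᵥ* N) ⬝ᵥ (u ᵥ* N)) ≤ c)
    (hd : 0 ≤ d) : d * frobInner M N ^ 2 ≤ M.rank * c * frobNorm M ^ 2 := by
  obtain ⟨F, hF, hrange⟩ := exists_orthonormal_columns (LinearMap.range M.mulVecLin)
  have hFN : d * frobNorm (Fᵀ * N) ^ 2 ≤ M.rank * c :=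
    calc d * frobNorm (Fᵀ * N) ^ 2
        = ∑ j, d * ((F.col j ᵥ* N) ⬝ᵥ (F.col j ᵥ* N)) := by
          rw [frobNorm_transpose_mul_sq_eq_sum, Finset.mul_sum]
      _ ≤ ∑ _j, c := Finset.sum_le_sum fun j _ =>
          h _ (hrange.le (col_mem_range_mulVecLin j)) (col_dotProduct_self hF j)
      _ = M.rank * c := by simp [rank]
  calc d * frobInner M N ^ 2
      = d * frobInner (Fᵀ * M) (Fᵀ * N) ^ 2 := by
        rw [← frobInner_mul_left, mul_transpose_mul_of_range_le hF hrange.ge]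
    _ ≤ d * (frobNorm (Fᵀ * M) ^ 2 * frobNorm (Fᵀ * N) ^ 2) := by
        gcongr
        exact frobInner_sq_le _ _
    _ = frobNorm (Fᵀ * M) ^ 2 * (d * frobNorm (Fᵀ * N) ^ 2) := by ring
    _ ≤ frobNorm M ^ 2 * (M.rank * c) :=
        mul_le_mul (frobNorm_transpose_mul_sq_le hF M) hFN (by positivity) (by positivity)
    _ = M.rank * c * frobNorm M ^ 2 := by ring

end OrthonormalColumns

namespace IsBestRankApprox

variable {n p k : ℕ} {Z H : Matrix (Fin n) (Fin p) ℝ}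

lemma frobNorm_residual_sq_le (h : IsBestRankApprox k Z H) {W : Matrix (Fin n) (Fin p) ℝ}
    (hW : W.rank ≤ k) : frobNorm (Z - H) ^ 2 ≤ frobNorm (Z - W) ^ 2 :=
  pow_le_pow_left₀ (frobNorm_nonneg _) (h.2 W hW) 2

/-- Perturbing `H` to `H * (1 + c • B)` does not raise its rank, so the quadratic
`c ↦ frobNorm (Z - H - c • (H * B)) ^ 2` is minimal at `c = 0`. -/
lemma frobInner_residual_mul (h : IsBestRankApprox k Z H) (B : Matrix (Fin p) (Fin p) ℝ) :
    frobInner (Z - H) (H * B) = 0 := by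
  have hquad : ∀ c : ℝ, 0 ≤ frobNorm (H * B) ^ 2 * (c * c)
      + (-2 * frobInner (Z - H) (H * B)) * c + 0 := fun c => by
    have hmin := h.frobNorm_residual_sq_le (W := H * (1 + c • B))
      ((rank_mul_le_left _ _).trans h.1)
    rw [Matrix.mul_add, Matrix.mul_one, Matrix.mul_smul, ← sub_sub, frobNorm_sub_sq (Z - H),
      frobInner_smul_right, frobNorm_smul_sq] at hmin
    linarith
  have hdiscrim := discrim_le_zero hquad
  rw [discrim] at hdiscrim
  nlinarith

lemma transpose_mul_residual (h : IsBestRankApprox k Z H) : Hᵀ * (Z - H) = 0 := by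
  rw [← frobNorm_eq_zero, ← sq_eq_zero_iff, ← frobInner_self, ← frobInner_mul_left, frobInner_comm,
    h.frobInner_residual_mul]

lemma vecMul_residual_of_mem_range (h : IsBestRankApprox k Z H) {e : Fin n → ℝ}
    (he : e ∈ LinearMap.range H.mulVecLin) : e ᵥ* (Z - H) = 0 := by
  obtain ⟨w, rfl⟩ := he
  rw [mulVecLin_apply, vecMul_mulVec, h.transpose_mul_residual, vecMul_zero]

lemma frobInner_residual_self (h : IsBestRankApprox k Z H) : frobInner H (Z - H) = 0 := by
  simpa only [Matrix.mul_one, frobInner_comm] using h.frobInner_residual_mul 1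

lemma frobInner_eq_frobNorm_sq (h : IsBestRankApprox k Z H) : frobInner Z H = frobNorm H ^ 2 := by
  have horth := h.frobInner_residual_self
  rw [frobInner_sub_right, frobInner_self] at horth
  rw [frobInner_comm]
  linarith

/-- Removing `D` from `H` makes room for the rank-one part of the residual in the direction `u`,
and the exchange cannot decrease the error. -/
lemma vecMul_residual_le_of_rank_sub_lt (h : IsBestRankApprox k Z H)
    {u : Fin n → ℝ} (hu : u ⬝ᵥ u = 1) {D : Matrix (Fin n) (Fin p) ℝ} (huD : u ᵥ* D = 0)
    (hD : frobInner D (Z - H) = 0) (hrank : (H - D).rank < k) :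
    (u ᵥ* (Z - H)) ⬝ᵥ (u ᵥ* (Z - H)) ≤ frobNorm D ^ 2 := by
  set v := u ᵥ* (Z - H) with hv
  have hmin := h.frobNorm_residual_sq_le (W := H - D + vecMulVec u v)
    ((matrix_rank_add_le _ _).trans ((Nat.add_le_add_left (rank_vecMulVec_le u v) _).trans hrank))
  have hsplit : Z - (H - D + vecMulVec u v) = D + (Z - H) - vecMulVec u v := by abel
  have hinner : frobInner (D + (Z - H)) (vecMulVec u v) = v ⬝ᵥ v := by
    rw [frobInner_comm, frobInner_vecMulVec, vecMul_add, huD, zero_add, ← hv]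
  rw [hsplit, frobNorm_sub_sq (D + (Z - H)), hinner, frobNorm_add_sq, hD,
    frobNorm_vecMulVec_sq hu] at hmin
  linarith

lemma vecMul_residual_le_of_mem_range (h : IsBestRankApprox k Z H) {u e : Fin n → ℝ}
    (hu : u ⬝ᵥ u = 1) (huH : u ᵥ* H = 0) (he : e ⬝ᵥ e = 1)
    (heH : e ∈ LinearMap.range H.mulVecLin) :
    (u ᵥ* (Z - H)) ⬝ᵥ (u ᵥ* (Z - H)) ≤ (e ᵥ* H) ⬝ᵥ (e ᵥ* H) := by
  have hue : u ⬝ᵥ e = 0 := by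
    obtain ⟨w, rfl⟩ := heH
    rw [mulVecLin_apply, dotProduct_mulVec, huH, zero_dotProduct]
  rw [← frobNorm_vecMulVec_sq he (e ᵥ* H)]
  refine h.vecMul_residual_le_of_rank_sub_lt hu ?_ ?_
    ((rank_sub_vecMulVec_vecMul_lt he heH).trans_le h.1)
  · rw [vecMul_vecMulVec, hue, zero_smul]
  · rw [frobInner_vecMulVec, h.vecMul_residual_of_mem_range heH, dotProduct_zero]

/-- In terms of singular values: `σ₁ (Z - H) ≤ σₖ H`, while by Weyl's inequality at least `d`
singular values of `X - H` are at least `σₖ H`. -/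
lemma mul_vecMul_residual_le (h : IsBestRankApprox k Z H) {d : ℕ} {X : Matrix (Fin n) (Fin p) ℝ}
    (hd : d + X.rank ≤ k) {u : Fin n → ℝ} (hu : u ⬝ᵥ u = 1) (huH : u ᵥ* H = 0) :
    d * ((u ᵥ* (Z - H)) ⬝ᵥ (u ᵥ* (Z - H))) ≤ frobNorm (X - H) ^ 2 := by
  set τ := (u ᵥ* (Z - H)) ⬝ᵥ (u ᵥ* (Z - H))
  rcases h.1.lt_or_eq with hlt | heq
  · have hτ : τ ≤ frobNorm (0 : Matrix (Fin n) (Fin p) ℝ) ^ 2 :=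
      h.vecMul_residual_le_of_rank_sub_lt hu (vecMul_zero u) (frobInner_zero_left _)
        (by rwa [sub_zero])
    rw [frobNorm_eq_zero.2 rfl, zero_pow two_ne_zero] at hτ
    exact (mul_nonpos_of_nonneg_of_nonpos d.cast_nonneg hτ).trans (sq_nonneg _)
  · obtain ⟨E, hE, hrange⟩ := exists_orthonormal_columns
      (LinearMap.range H.mulVecLin ⊓ LinearMap.ker Xᵀ.mulVecLin)
    have hmem := fun j => hrange.le (col_mem_range_mulVecLin (E := E) j)
    have hdim := rank_le_finrank_inf_ker_add_rank H X
    have hEX : Eᵀ * X = 0 := by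
      rw [← transpose_eq_zero, transpose_mul, transpose_transpose]
      ext i j
      exact congrFun (hmem j).2 i
    calc d * τ
        ≤ finrank ℝ ↥(LinearMap.range H.mulVecLin ⊓ LinearMap.ker Xᵀ.mulVecLin) * τ := by
          gcongr
          · exact Finset.sum_nonneg fun _ _ => mul_self_nonneg _
          · omega
      _ = ∑ _j, τ := by simp
      _ ≤ ∑ j, (E.col j ᵥ* H) ⬝ᵥ (E.col j ᵥ* H) := Finset.sum_le_sum fun j _ =>
          h.vecMul_residual_le_of_mem_range hu huH (col_dotProduct_self hE j) (hmem j).1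
      _ = frobNorm (Eᵀ * (X - H)) ^ 2 := by
          rw [← frobNorm_transpose_mul_sq_eq_sum, Matrix.mul_sub, hEX, zero_sub, frobNorm_neg]
      _ ≤ frobNorm (X - H) ^ 2 := frobNorm_transpose_mul_sq_le hE _

lemma frobInner_residual_sq_le_of_transpose_mul_eq_zero (h : IsBestRankApprox k Z H) {d : ℕ}
    {X P : Matrix (Fin n) (Fin p) ℝ} (hd : d + X.rank ≤ k) (hP : Pᵀ * H = 0) :
    d * frobInner P (Z - H) ^ 2 ≤ P.rank * frobNorm (X - H) ^ 2 * frobNorm P ^ 2 := by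
  refine frobInner_sq_le_rank_mul (fun u hu hunit => ?_) d.cast_nonneg
  obtain ⟨w, rfl⟩ := hu
  refine h.mul_vecMul_residual_le hd hunit ?_
  rw [mulVecLin_apply, vecMul_mulVec, hP, vecMul_zero]

/-- Only the part `P` of `M` orthogonal to the columns of `H` is seen by the residual; it has rank
at most that of `M` and norm at most that of `M - H * B`. -/
lemma frobInner_residual_sq_le (h : IsBestRankApprox k Z H) {d : ℕ}
    {X : Matrix (Fin n) (Fin p) ℝ} (hd : d + X.rank ≤ k) (M : Matrix (Fin n) (Fin p) ℝ)
    (B : Matrix (Fin p) (Fin p) ℝ) :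
    d * frobInner M (Z - H) ^ 2 ≤
      M.rank * frobNorm (X - H) ^ 2 * frobNorm (M - H * B) ^ 2 := by
  obtain ⟨E, hE, hrange⟩ := exists_orthonormal_columns (LinearMap.range H.mulVecLin)
  have hEH : E * (Eᵀ * H) = H := mul_transpose_mul_of_range_le hE hrange.ge
  have hER : Eᵀ * (Z - H) = 0 := by
    ext i j
    exact congrFun (h.vecMul_residual_of_mem_range (hrange.le (col_mem_range_mulVecLin i))) j
  set P := M - E * (Eᵀ * M) with hP
  have hinner : frobInner M (Z - H) = frobInner P (Z - H) := by
    rw [hP, frobInner_sub_left, frobInner_mul_left, hER, frobInner_comm _ 0, frobInner_zero_left,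
      sub_zero]
  have hrank : P.rank ≤ M.rank := by
    have hfactor : P = (1 - E * Eᵀ) * M := by rw [Matrix.sub_mul, Matrix.one_mul, Matrix.mul_assoc]
    exact hfactor ▸ rank_mul_le_right _ _
  have hnorm : frobNorm P ^ 2 ≤ frobNorm (M - H * B) ^ 2 := by
    have hEHB : E * (Eᵀ * (H * B)) = H * B := by
      rw [← Matrix.mul_assoc Eᵀ, ← Matrix.mul_assoc E, hEH]
    have hPB : P = M - H * B - E * (Eᵀ * (M - H * B)) := by
      rw [Matrix.mul_sub, Matrix.mul_sub, hEHB, sub_sub_sub_cancel_right]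
    exact hPB ▸ frobNorm_sub_mul_transpose_mul_sq_le hE _
  have hHP : Pᵀ * H = 0 := by
    rw [hP, transpose_sub, transpose_mul, transpose_mul, transpose_transpose, Matrix.sub_mul,
      Matrix.mul_assoc, Matrix.mul_assoc, hEH, sub_self]
  rw [hinner]
  refine (h.frobInner_residual_sq_le_of_transpose_mul_eq_zero hd hHP).trans ?_
  gcongr

/-- Only `frobInner X (Z - H)` can make `H` a worse approximation of `X` than `Z`, because `H` is
orthogonal to the residual. -/
lemma frobNorm_sub_sq_mul_le (h : IsBestRankApprox k Z H) {X : Matrix (Fin n) (Fin p) ℝ} {ε : ℝ}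
    (hε : 0 ≤ ε) (hXk : X.rank < k) (hX : X.rank ≤ ε ^ 2 * (k - X.rank)) :
    (1 - 2 * ε) * frobNorm (X - H) ^ 2 ≤ frobNorm (X - Z) ^ 2 := by
  set d := k - X.rank with hd
  have hdpos : (0 : ℝ) < d := by exact_mod_cast Nat.sub_pos_of_lt hXk
  have hXd : X.rank ≤ ε ^ 2 * d := by rwa [hd, Nat.cast_sub hXk.le]
  have hcorr : frobInner X (Z - H) ≤ ε * frobNorm (X - H) ^ 2 := by
    refine le_of_sq_le_sq ?_ (by positivity)
    have hsq := h.frobInner_residual_sq_le (d := d) (X := X) (by omega) X 1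
    rw [Matrix.mul_one] at hsq
    refine le_of_mul_le_mul_left (hsq.trans ?_) hdpos
    calc X.rank * frobNorm (X - H) ^ 2 * frobNorm (X - H) ^ 2
        ≤ ε ^ 2 * d * frobNorm (X - H) ^ 2 * frobNorm (X - H) ^ 2 := by gcongr
      _ = d * (ε * frobNorm (X - H) ^ 2) ^ 2 := by ring
  have hinner : frobInner (X - H) (Z - H) = frobInner X (Z - H) := by
    rw [frobInner_sub_left, h.frobInner_residual_self, sub_zero]
  have hexpand : frobNorm (X - Z) ^ 2 =
      frobNorm (X - H) ^ 2 - 2 * frobInner X (Z - H) + frobNorm (Z - H) ^ 2 := by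
    rw [← hinner, ← frobNorm_sub_sq, sub_sub_sub_cancel_right]
  rw [hexpand]
  linarith [sq_nonneg (frobNorm (Z - H))]

end IsBestRankApprox

section SignStep

variable {n p m : ℕ}

lemma sgnVec_dotProduct_self (v : Fin m → ℝ) : sgnVec v ⬝ᵥ v = l1norm v :=
  Finset.sum_congr rfl fun i _ => by
    rcases lt_trichotomy (v i) 0 with h | h | h
    · rw [sgnVec, Real.sign_of_neg h, abs_of_neg h, neg_one_mul]
    · rw [h, mul_zero, abs_zero]
    · rw [sgnVec, Real.sign_of_pos h, abs_of_pos h, one_mul]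

lemma sgnVec_dotProduct_le (v w : Fin m → ℝ) : sgnVec v ⬝ᵥ w ≤ l1norm w :=
  Finset.sum_le_sum fun i _ => by
    rcases Real.sign_apply_eq (v i) with h | h | h <;> rw [sgnVec, h]
    · simpa only [neg_one_mul] using neg_le_abs (w i)
    · simp only [zero_mul, abs_nonneg]
    · simpa only [one_mul] using le_abs_self (w i)

lemma frobNorm_sub_smul_sq_le {M W : Matrix (Fin n) (Fin p) ℝ} {L γ δ : ℝ} (hγ : 0 < γ)
    (hδ : 2 * δ ≤ 1) (hW : W ≠ 0) (hL : frobNorm M * frobNorm W ≤ γ * L)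
    (hcorr : (1 - δ) * L ≤ frobInner M W) :
    frobNorm (M - (L / frobNorm W ^ 2) • W) ^ 2 ≤ (1 - (1 - 2 * δ) / γ ^ 2) * frobNorm M ^ 2 := by
  have hWpos : 0 < frobNorm W := (frobNorm_nonneg W).lt_of_ne' (frobNorm_eq_zero.not.2 hW)
  have hLnonneg : 0 ≤ L := nonneg_of_mul_nonneg_right
    ((mul_nonneg (frobNorm_nonneg M) hWpos.le).trans hL) hγ
  have hstep : frobNorm M ^ 2 / γ ^ 2 ≤ L ^ 2 / frobNorm W ^ 2 := by
    rw [div_le_div_iff₀ (by positivity) (by positivity), ← mul_pow, ← mul_pow, mul_comm L]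
    exact pow_le_pow_left₀ (mul_nonneg (frobNorm_nonneg M) hWpos.le) hL 2
  calc frobNorm (M - (L / frobNorm W ^ 2) • W) ^ 2
      = frobNorm M ^ 2 - 2 * (L / frobNorm W ^ 2) * frobInner M W + L ^ 2 / frobNorm W ^ 2 := by
        rw [frobNorm_sub_sq, frobInner_smul_right, frobNorm_smul_sq]
        field_simp
    _ ≤ frobNorm M ^ 2 - 2 * (L / frobNorm W ^ 2) * ((1 - δ) * L) + L ^ 2 / frobNorm W ^ 2 := by
        gcongr
    _ = frobNorm M ^ 2 - (1 - 2 * δ) * (L ^ 2 / frobNorm W ^ 2) := by ring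
    _ ≤ frobNorm M ^ 2 - (1 - 2 * δ) * (frobNorm M ^ 2 / γ ^ 2) := by
        have : 0 ≤ 1 - 2 * δ := by linarith
        gcongr
    _ = (1 - (1 - 2 * δ) / γ ^ 2) * frobNorm M ^ 2 := by ring

variable {A : Matrix (Fin n) (Fin p) ℝ → Fin m → ℝ} {M G W : Matrix (Fin n) (Fin p) ℝ} {t : ℕ}

lemma IsBestRankApprox.frobNorm_sq_le_l1norm {v : Fin m → ℝ}
    (hG : ∀ Z, frobInner G Z = sgnVec v ⬝ᵥ A Z) (hW : IsBestRankApprox t G W) :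
    frobNorm W ^ 2 ≤ l1norm (A W) := by
  rw [← hW.frobInner_eq_frobNorm_sq, hG]
  exact sgnVec_dotProduct_le _ _

lemma IsBestRankApprox.mul_l1norm_sub_frobInner_sq_le
    (hG : ∀ Z, frobInner G Z = sgnVec (A M) ⬝ᵥ A Z) (hW : IsBestRankApprox t G W) :
    t * (l1norm (A M) - frobInner M W) ^ 2 ≤ M.rank * (frobNorm M * frobNorm W) ^ 2 := by
  have h := hW.frobInner_residual_sq_le (d := t) (X := 0) (by rw [rank_zero, add_zero]) M 0
  rw [frobInner_sub_right, frobInner_comm M G, hG, sgnVec_dotProduct_self, zero_sub, frobNorm_neg,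
    Matrix.mul_zero, sub_zero] at h
  linarith

lemma IsBestRankApprox.frobNorm_sub_sign_step_sq_le {α β γ δ : ℝ} (hα : 0 < α) (hγ : 0 < γ)
    (hβ : β ≤ γ * α) (hδ₀ : 0 ≤ δ) (hδ : 2 * δ ≤ 1) (ht : 0 < t)
    (hrank : M.rank * γ ^ 2 ≤ δ ^ 2 * t) (hG : ∀ Z, frobInner G Z = sgnVec (A M) ⬝ᵥ A Z)
    (hW : IsBestRankApprox t G W) (hAM : α * frobNorm M ≤ l1norm (A M))
    (hAW : l1norm (A W) ≤ β * frobNorm W) :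
    frobNorm (M - (l1norm (A M) / frobNorm W ^ 2) • W) ^ 2 ≤
      (1 - (1 - 2 * δ) / γ ^ 2) * frobNorm M ^ 2 := by
  set L := l1norm (A M)
  have hM := frobNorm_nonneg M
  have hL : 0 ≤ L := (mul_nonneg hα.le hM).trans hAM
  have hMW : frobNorm M * frobNorm W ≤ γ * L := by
    rcases (frobNorm_nonneg W).eq_or_lt' with hW₀ | hWpos
    · rw [hW₀, mul_zero]
      positivity
    · have hWβ : frobNorm W ≤ β := by
        refine le_of_mul_le_mul_right ?_ hWpos
        rw [← sq]
        exact (hW.frobNorm_sq_le_l1norm hG).trans hAW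
      calc frobNorm M * frobNorm W ≤ frobNorm M * (γ * α) := by gcongr; exact hWβ.trans hβ
        _ = γ * (α * frobNorm M) := by ring
        _ ≤ γ * L := by gcongr
  have hcorr : (1 - δ) * L ≤ frobInner M W := by
    have hsq : (L - frobInner M W) ^ 2 ≤ (δ * L) ^ 2 := by
      refine le_of_mul_le_mul_left ?_ (Nat.cast_pos.2 ht : (0 : ℝ) < t)
      calc t * (L - frobInner M W) ^ 2
          ≤ M.rank * (frobNorm M * frobNorm W) ^ 2 := hW.mul_l1norm_sub_frobInner_sq_le hG
        _ ≤ M.rank * (γ * L) ^ 2 := by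
            gcongr
            exact mul_nonneg hM (frobNorm_nonneg W)
        _ = M.rank * γ ^ 2 * L ^ 2 := by ring
        _ ≤ δ ^ 2 * t * L ^ 2 := by gcongr
        _ = t * (δ * L) ^ 2 := by ring
    linarith [le_of_sq_le_sq hsq (mul_nonneg hδ₀ hL)]
  by_cases hW₀ : W = 0
  · rw [hW₀, frobInner_comm, frobInner_zero_left] at hcorr
    have hM₀ : frobNorm M = 0 := by nlinarith
    rw [hW₀, smul_zero, sub_zero, hM₀, zero_pow two_ne_zero, mul_zero]
  · exact frobNorm_sub_smul_sq_le hγ hδ hW₀ hMW hcorr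

end SignStep

section Recovery

variable {N₁ N₂ m : ℕ}

/-- The modified rank-restricted isometry property of order `k` with constants `α` and `β`: on
matrices of rank at most `k`, the `ℓ₁`-norm of the measurements is comparable to the Frobenius
norm. -/
def ModifiedRankRIP (A : Matrix (Fin N₁) (Fin N₂) ℝ →ₗ[ℝ] (Fin m → ℝ)) (k : ℕ) (α β : ℝ) : Prop :=
  ∀ Z : Matrix (Fin N₁) (Fin N₂) ℝ, Z.rank ≤ k →
    α * frobNorm Z ≤ l1norm (A Z) ∧ l1norm (A Z) ≤ β * frobNorm Z

/-- `Y'` is a possible successor of the iterate `Y` in modified iterative hard thresholding with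
measurements `y`, where `Astar` plays the role of the adjoint of `A`. Best low-rank approximations
need not be unique, so a step is a relation rather than a function. -/
def IsThresholdingStep (A : Matrix (Fin N₁) (Fin N₂) ℝ → Fin m → ℝ)
    (Astar : (Fin m → ℝ) → Matrix (Fin N₁) (Fin N₂) ℝ) (s t : ℕ) (y : Fin m → ℝ)
    (Y Y' : Matrix (Fin N₁) (Fin N₂) ℝ) : Prop :=
  ∃ W : Matrix (Fin N₁) (Fin N₂) ℝ,
    IsBestRankApprox t (Astar (sgnVec (y - A Y))) W ∧
    IsBestRankApprox s (Y + (if W ≠ 0 then l1norm (y - A Y) / frobNorm W ^ 2 else 0) • W) Y'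

lemma IsThresholdingStep.rank_le {A : Matrix (Fin N₁) (Fin N₂) ℝ → Fin m → ℝ}
    {Astar : (Fin m → ℝ) → Matrix (Fin N₁) (Fin N₂) ℝ} {s t : ℕ} {y : Fin m → ℝ}
    {Y Y' : Matrix (Fin N₁) (Fin N₂) ℝ} (h : IsThresholdingStep A Astar s t y Y Y') :
    Y'.rank ≤ s :=
  let ⟨_, _, hY'⟩ := h
  hY'.1

lemma one_sub_le_sq_mul {x : ℝ} (hx₀ : 0 ≤ x) (hx₁ : x ≤ 1) :
    1 - (9 / 10) * x ≤ (1 - 2 * (x / 9)) * (1 - x / 3) ^ 2 := by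
  nlinarith [mul_nonneg (sq_nonneg x) (sub_nonneg.2 hx₁)]

lemma contraction_rate_nonneg {γ : ℝ} (hγ : 1 ≤ γ) : 0 ≤ 1 - 1 / (3 * γ ^ 2) := by
  have hsq : 1 ≤ γ ^ 2 := one_le_pow₀ hγ
  rw [sub_nonneg, div_le_one₀ (by positivity)]
  linarith

variable {A : Matrix (Fin N₁) (Fin N₂) ℝ →ₗ[ℝ] (Fin m → ℝ)}
  {Astar : (Fin m → ℝ) → Matrix (Fin N₁) (Fin N₂) ℝ} {r s t : ℕ} {α β γ : ℝ}

lemma ModifiedRankRIP.frobNorm_sub_sign_step_sq_le (hRIP : ModifiedRankRIP A t α β) (hγ : 1 ≤ γ)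
    (hα : 0 < α) (hβ : β ≤ γ * α) (ht₀ : 0 < t)
    (hadj : ∀ u Z, frobInner (Astar u) Z = u ⬝ᵥ A Z)
    {M W : Matrix (Fin N₁) (Fin N₂) ℝ} (hM : 400 * γ ^ 2 * M.rank ≤ t)
    (hW : IsBestRankApprox t (Astar (sgnVec (A M))) W) :
    frobNorm (M - (l1norm (A M) / frobNorm W ^ 2) • W) ^ 2 ≤
      (1 - (9 / 10) * (1 / γ ^ 2)) * frobNorm M ^ 2 := by
  have hMt : M.rank ≤ t := by
    have hsq : 1 ≤ γ ^ 2 := one_le_pow₀ hγ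
    have : (M.rank : ℝ) ≤ t := by nlinarith [M.rank.cast_nonneg (α := ℝ)]
    exact_mod_cast this
  have h := hW.frobNorm_sub_sign_step_sq_le (A := A) (δ := 1 / 20) hα (by positivity) hβ
    (by norm_num) (by norm_num) ht₀ (by linarith) (fun Z => hadj _ Z) (hRIP M hMt).1 (hRIP W hW.1).2
  convert h using 2
  ring

lemma IsThresholdingStep.exists_sign_step {X Y Y' : Matrix (Fin N₁) (Fin N₂) ℝ}
    (h : IsThresholdingStep A Astar s t (A X) Y Y') :
    ∃ W, IsBestRankApprox t (Astar (sgnVec (A (X - Y)))) W ∧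
      IsBestRankApprox s (Y + (l1norm (A (X - Y)) / frobNorm W ^ 2) • W) Y' := by
  obtain ⟨W, hW, hY'⟩ := h
  have hweight : (if W ≠ 0 then l1norm (A X - A Y) / frobNorm W ^ 2 else 0) =
      l1norm (A X - A Y) / frobNorm W ^ 2 :=
    ite_eq_left_iff.2 fun hW₀ => by
      rw [frobNorm_eq_zero.2 (not_not.1 hW₀), zero_pow two_ne_zero, div_zero]
  rw [hweight] at hY'
  exact ⟨W, by rwa [map_sub], by rwa [map_sub]⟩

lemma IsBestRankApprox.frobNorm_sub_sq_mul_le_of_mul_pow_four_le (hr : 0 < r) (hγ : 1 ≤ γ)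
    (hs : 100 * γ ^ 4 * r ≤ s) {X Z H : Matrix (Fin N₁) (Fin N₂) ℝ} (hX : X.rank ≤ r)
    (h : IsBestRankApprox s Z H) :
    (1 - 2 * (1 / γ ^ 2 / 9)) * frobNorm (X - H) ^ 2 ≤ frobNorm (X - Z) ^ 2 := by
  have hr' : (1 : ℝ) ≤ r := by exact_mod_cast hr
  have hX' : (X.rank : ℝ) ≤ r := by exact_mod_cast hX
  have hγ₄ : 1 ≤ γ ^ 4 := one_le_pow₀ hγ
  have hXs : (X.rank : ℝ) < s := by nlinarith
  have hgap : 81 * γ ^ 4 * X.rank ≤ s - X.rank := by nlinarith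
  refine h.frobNorm_sub_sq_mul_le (by positivity) (by exact_mod_cast hXs) ?_
  field_simp
  linarith

lemma IsThresholdingStep.frobNorm_sub_le (hr : 0 < r) (hγ : 1 ≤ γ) (hs : 100 * γ ^ 4 * r ≤ s)
    (ht : 800 * γ ^ 2 * s ≤ t) (hα : 0 < α) (hβ : β ≤ γ * α)
    (hadj : ∀ u Z, frobInner (Astar u) Z = u ⬝ᵥ A Z) (hRIP : ModifiedRankRIP A t α β)
    {X Y Y' : Matrix (Fin N₁) (Fin N₂) ℝ} (hX : X.rank ≤ r) (hY : Y.rank ≤ s)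
    (h : IsThresholdingStep A Astar s t (A X) Y Y') :
    frobNorm (X - Y') ≤ (1 - 1 / (3 * γ ^ 2)) * frobNorm (X - Y) := by
  have hγ₂ : 1 ≤ γ ^ 2 := one_le_pow₀ hγ
  have hrs : (r : ℝ) ≤ s := by nlinarith [one_le_pow₀ hγ (n := 4), r.cast_nonneg (α := ℝ)]
  have ht₀ : (0 : ℝ) < t := by nlinarith [(Nat.cast_pos.2 hr : (0 : ℝ) < r)]
  obtain ⟨W, hW, hY'⟩ := h.exists_sign_step
  have hsign : frobNorm (X - (Y + (l1norm (A (X - Y)) / frobNorm W ^ 2) • W)) ^ 2 ≤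
      (1 - (9 / 10) * (1 / γ ^ 2)) * frobNorm (X - Y) ^ 2 := by
    have hM : ((X - Y).rank : ℝ) ≤ 2 * s := by
      calc ((X - Y).rank : ℝ) ≤ r + s := by exact_mod_cast (matrix_rank_sub_le X Y).trans (by omega)
        _ ≤ 2 * s := by linarith
    rw [← sub_sub]
    exact hRIP.frobNorm_sub_sign_step_sq_le hγ hα hβ (Nat.cast_pos.1 ht₀) hadj (by nlinarith) hW
  have hx₁ : 1 / γ ^ 2 ≤ 1 := (div_le_one₀ (by positivity)).2 hγ₂
  have hfactor : 0 < 1 - 2 * (1 / γ ^ 2 / 9) := by linarith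
  rw [show 1 / (3 * γ ^ 2) = 1 / γ ^ 2 / 3 by ring]
  refine le_of_sq_le_sq (le_of_mul_le_mul_left ?_ hfactor)
    (mul_nonneg (by linarith) (frobNorm_nonneg _))
  calc (1 - 2 * (1 / γ ^ 2 / 9)) * frobNorm (X - Y') ^ 2
      ≤ (1 - (9 / 10) * (1 / γ ^ 2)) * frobNorm (X - Y) ^ 2 :=
        (hY'.frobNorm_sub_sq_mul_le_of_mul_pow_four_le hr hγ hs hX).trans hsign
    _ ≤ (1 - 2 * (1 / γ ^ 2 / 9)) * (1 - 1 / γ ^ 2 / 3) ^ 2 * frobNorm (X - Y) ^ 2 := by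
        gcongr
        exact one_sub_le_sq_mul (by positivity) hx₁
    _ = (1 - 2 * (1 / γ ^ 2 / 9)) * ((1 - 1 / γ ^ 2 / 3) * frobNorm (X - Y)) ^ 2 := by ring

lemma sqrt_two_rate_mem_Ioo (hγ : 1 ≤ γ) :
    1 - (3 - 2 * √2) / (10 * γ ^ 2) ∈ Set.Ioo (0 : ℝ) 1 := by
  have hsq : 1 ≤ γ ^ 2 := one_le_pow₀ hγ
  have hlt : √2 < 3 / 2 := (Real.sqrt_lt' (by norm_num)).2 (by norm_num)
  refine ⟨sub_pos.2 ((div_lt_one (by positivity)).2 ?_), sub_lt_self _ (div_pos ?_ (by positivity))⟩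
  · linarith [Real.sqrt_nonneg 2]
  · linarith

lemma contraction_rate_le_sqrt_two_rate (γ : ℝ) :
    1 - 1 / (3 * γ ^ 2) ≤ 1 - (3 - 2 * √2) / (10 * γ ^ 2) := by
  have hle : 7 / 5 ≤ √2 := Real.le_sqrt_of_sq_le (by norm_num)
  have hcoef : (3 - 2 * √2) / 10 ≤ 1 / 3 := by linarith
  calc 1 - 1 / (3 * γ ^ 2) = 1 - 1 / 3 * (1 / γ ^ 2) := by ring
    _ ≤ 1 - (3 - 2 * √2) / 10 * (1 / γ ^ 2) :=
        sub_le_sub_left (mul_le_mul_of_nonneg_right hcoef (by positivity)) 1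
    _ = 1 - (3 - 2 * √2) / (10 * γ ^ 2) := by ring

lemma contraction_rate_pow_le_sqrt_two_rate_pow (hγ : 1 ≤ γ) (n : ℕ) :
    (1 - 1 / (3 * γ ^ 2)) ^ n ≤ (1 - (3 - 2 * √2) / (10 * γ ^ 2)) ^ n :=
  pow_le_pow_left₀ (contraction_rate_nonneg hγ) (contraction_rate_le_sqrt_two_rate γ) n

theorem stmt0_general (hr : 0 < r) (hγ : 1 ≤ γ) (hs : 100 * γ ^ 4 * r ≤ s)
    (ht : 800 * γ ^ 2 * s ≤ t) (hadj : ∀ u Z, frobInner (Astar u) Z = u ⬝ᵥ A Z)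
    (hα : 0 < α) (hratio : β / α ≤ γ) (hRIP : ModifiedRankRIP A t α β)
    {X : Matrix (Fin N₁) (Fin N₂) ℝ} (hX : X.rank ≤ r)
    {Xseq : ℕ → Matrix (Fin N₁) (Fin N₂) ℝ} (h0 : (Xseq 0).rank ≤ s)
    (hstep : ∀ n, IsThresholdingStep A Astar s t (A X) (Xseq n) (Xseq (n + 1))) :
    (∀ n, frobNorm (X - Xseq n) ≤ (1 - 1 / (3 * γ ^ 2)) ^ n * frobNorm (X - Xseq 0)) ∧
      Filter.Tendsto Xseq Filter.atTop (nhds X) := by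
  have hβ : β ≤ γ * α := (div_le_iff₀ hα).1 hratio
  have hρ₀ := contraction_rate_nonneg hγ
  have hρ₁ : 1 - 1 / (3 * γ ^ 2) < 1 := sub_lt_self _ (by positivity)
  have hrank : ∀ n, (Xseq n).rank ≤ s := Nat.rec h0 fun n _ => (hstep n).rank_le
  have hbound : ∀ n,
      frobNorm (X - Xseq n) ≤ (1 - 1 / (3 * γ ^ 2)) ^ n * frobNorm (X - Xseq 0) := fun n =>
    le_geom (u := fun k => frobNorm (X - Xseq k)) hρ₀ n fun k _ =>
      (hstep k).frobNorm_sub_le hr hγ hs ht hα hβ hadj hRIP hX (hrank k)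
  refine ⟨hbound, tendsto_of_frobNorm_sub_tendsto_zero <|
    squeeze_zero (fun _ => frobNorm_nonneg _) hbound ?_⟩
  simpa only [zero_mul] using
    (tendsto_pow_atTop_nhds_zero_of_lt_one hρ₀ hρ₁).mul_const (frobNorm (X - Xseq 0))

end Recovery

/-- Theorem 1 (idealized recovery): under the modified rank-restricted isometry property of
order t+s+r (s = 100γ⁴r, t = 800γ¹²s) with ratio β/α ≤ γ, the modified iterative hard
thresholding sequence started at X₀ = 0 with exact measurements y = 𝓐(X) of a matrix X of
rank at most r satisfies ‖X − Xₙ‖_F ≤ ρⁿ‖X‖_F with ρ := 1 − (3 − 2√2)/(10γ²) ∈ (0,1);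
in particular Xₙ → X. -/
theorem stmt0 {N₁ N₂ m : ℕ} (hN₁ : 0 < N₁) (hN₂ : 0 < N₂) (hm : 0 < m)
    (r s t : ℕ) (hr : 0 < r) (γ : ℝ) (hγ : 1 ≤ γ)
    (hs : (s : ℝ) = 100 * γ ^ 4 * r) (ht : (t : ℝ) = 800 * γ ^ 12 * s)
    (hdim : t + s + r ≤ min N₁ N₂)
    (A : Matrix (Fin N₁) (Fin N₂) ℝ →ₗ[ℝ] (Fin m → ℝ))
    (Astar : (Fin m → ℝ) →ₗ[ℝ] Matrix (Fin N₁) (Fin N₂) ℝ)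
    (hadj : ∀ (u : Fin m → ℝ) (Z : Matrix (Fin N₁) (Fin N₂) ℝ),
      frobInner (Astar u) Z = ∑ i, u i * A Z i)
    (α β : ℝ) (hα : 0 < α) (hαβ : α ≤ β) (hratio : β / α ≤ γ)
    (hRIP : ∀ Z : Matrix (Fin N₁) (Fin N₂) ℝ, Z.rank ≤ t + s + r →
      α * frobNorm Z ≤ l1norm (A Z) ∧ l1norm (A Z) ≤ β * frobNorm Z)
    (X : Matrix (Fin N₁) (Fin N₂) ℝ) (hX : X.rank ≤ r)
    (y : Fin m → ℝ) (hy : y = A X)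
    (Xseq : ℕ → Matrix (Fin N₁) (Fin N₂) ℝ) (h0 : Xseq 0 = 0)
    (hstep : ∀ n : ℕ, ∃ W : Matrix (Fin N₁) (Fin N₂) ℝ,
      IsBestRankApprox t (Astar (sgnVec (y - A (Xseq n)))) W ∧
      IsBestRankApprox s
        (Xseq n +
          (if W ≠ 0 then l1norm (y - A (Xseq n)) / frobNorm W ^ 2 else 0) • W)
        (Xseq (n + 1))) :
    (0 < 1 - (3 - 2 * Real.sqrt 2) / (10 * γ ^ 2) ∧
        1 - (3 - 2 * Real.sqrt 2) / (10 * γ ^ 2) < 1) ∧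
      (∀ n : ℕ, frobNorm (X - Xseq n) ≤
        (1 - (3 - 2 * Real.sqrt 2) / (10 * γ ^ 2)) ^ n * frobNorm X) ∧
      Filter.Tendsto Xseq Filter.atTop (nhds X) := by
  subst hy
  have h := stmt0_general hr hγ hs.ge (by rw [ht]; gcongr; norm_num) hadj hα hratio
    (fun Z hZ => hRIP Z (by omega)) hX (by rw [h0, rank_zero]; exact s.zero_le) hstep
  rw [h0, sub_zero] at h
  exact ⟨sqrt_two_rate_mem_Ioo hγ, fun n => (h.1 n).trans <| mul_le_mul_of_nonneg_right
    (contraction_rate_pow_le_sqrt_two_rate_pow hγ n) (frobNorm_nonneg X), h.2⟩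
end

section
/- Let X, Z ∈ ℝ^{N₁×N₂} and let r, s be integers with 1 ≤ r ≤ s and s + 2r ≤ min{N₁, N₂}. If rank(X) ≤ r and H is a best rank-s approximation of Z, then ‖X − H‖_F ≤ (1 + √(8r/(s+r)))·‖X − Z‖_F. -/
/-!
Let `V` and `S` be the row spaces of `H` and `X`. Optimality of `H` makes the rows of `Z - H`
orthogonal to `V`, and exchanging a direction `w` of `V` for a direction `v` of `Vᗮ` shows that
the rows of `Z - H` have no more energy along `v` than those of `H` have along `w`. Write
`K = Vᗮ ⊓ (V ⊔ S)` and `W = V ⊓ Sᗮ`, and let `g` be the norm of the projection of `Z - H` to `K`.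
If `dim V < s`, then `H = Z` and `g = 0`. Otherwise `dim K ≤ r` and `dim W ≥ s - r`, and comparing
every direction of `K` with every direction of `W`, on which `H` and `Z - X` have the same
projection, yields `(s - r) g² ≤ r ‖X - Z‖²`. Moreover
`g ≤ ‖Z - H‖ ≤ ‖X - Z‖`, and adding `2r` times the square of this gives
`(s + r) g² ≤ 3r ‖X - Z‖²`. Finally the rows of `X - H` lie in `V ⊔ S`, so `Z - H` can be replaced
by its projection to `K` in `‖X - H‖² = ⟪X - H, X - Z⟫ + ⟪X - H, Z - H⟫`, and Cauchy–Schwarz gives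
`‖X - H‖ ≤ ‖X - Z‖ + g`.
-/

open Module WithLp
open scoped InnerProductSpace

section FamilySpan

variable {K E ι : Type*} [DivisionRing K] [AddCommGroup E] [Module K E]

lemma finrank_sup_span_singleton_le (V : Submodule K E) [FiniteDimensional K V] (v : E) :
    finrank K (V ⊔ K ∙ v : Submodule K E) ≤ finrank K V + 1 :=
  (Submodule.finrank_add_le_finrank_add_finrank V (K ∙ v)).trans <| by
    gcongr
    simpa using finrank_span_le_card (R := K) ({v} : Set E)

variable (K) in
/-- The subspace spanned by a family of vectors; the row space, for the rows of a matrix. -/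
abbrev familySpan (h : ι → E) : Submodule K E :=
  Submodule.span K (Set.range h)

lemma mem_familySpan (h : ι → E) (i : ι) : h i ∈ familySpan K h :=
  Submodule.subset_span ⟨i, rfl⟩

lemma familySpan_le_iff {h : ι → E} {V : Submodule K E} : familySpan K h ≤ V ↔ ∀ i, h i ∈ V :=
  Submodule.span_le.trans Set.range_subset_iff

lemma familySpan_update_le [DecidableEq ι] (h : ι → E) (i : ι) (w : E) :
    familySpan K (Function.update h i w) ≤ familySpan K h ⊔ K ∙ w := by
  rw [familySpan_le_iff, Function.forall_update_iff h fun _ y ↦ y ∈ familySpan K h ⊔ K ∙ w]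
  exact ⟨Submodule.mem_sup_right (Submodule.mem_span_singleton_self w),
    fun j _ ↦ Submodule.mem_sup_left (mem_familySpan h j)⟩

instance [Finite ι] (h : ι → E) : FiniteDimensional K (familySpan K h) :=
  FiniteDimensional.span_of_finite K (Set.finite_range h)

end FamilySpan

section Subspaces

variable {𝕜 E : Type*} [RCLike 𝕜] [NormedAddCommGroup E] [InnerProductSpace 𝕜 E]

lemma finrank_le_finrank_inf_orthogonal_add_finrank (V S : Submodule 𝕜 E)
    [FiniteDimensional 𝕜 V] [FiniteDimensional 𝕜 S] :
    finrank 𝕜 V ≤ finrank 𝕜 (V ⊓ Sᗮ : Submodule 𝕜 E) + finrank 𝕜 S := by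
  let P : V →ₗ[𝕜] S := (S.orthogonalProjectionOnto : E →ₗ[𝕜] S) ∘ₗ V.subtype
  have ker_P : finrank 𝕜 (LinearMap.ker P) = finrank 𝕜 (V ⊓ Sᗮ : Submodule 𝕜 E) := by
    rw [← Submodule.map_comap_subtype, Submodule.finrank_map_subtype_eq, LinearMap.ker_comp,
      Submodule.ker_orthogonalProjectionOnto]
  have range_P : finrank 𝕜 (LinearMap.range P) ≤ finrank 𝕜 S := Submodule.finrank_le _
  have := P.finrank_range_add_finrank_ker
  omega

lemma finrank_orthogonal_inf_sup_le (V S : Submodule 𝕜 E)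
    [FiniteDimensional 𝕜 V] [FiniteDimensional 𝕜 S] :
    finrank 𝕜 (Vᗮ ⊓ (V ⊔ S) : Submodule 𝕜 E) ≤ finrank 𝕜 S := by
  have := Submodule.finrank_add_inf_finrank_orthogonal (le_sup_left : V ≤ V ⊔ S)
  have := Submodule.finrank_add_le_finrank_add_finrank V S
  omega

lemma inner_starProjection_orthogonal_inf_eq {V T : Submodule 𝕜 E} [V.HasOrthogonalProjection]
    [(Vᗮ ⊓ T).HasOrthogonalProjection] (hVT : V ≤ T) {x y : E} (hx : x ∈ T) (hy : y ∈ Vᗮ) :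
    ⟪x, (Vᗮ ⊓ T).starProjection y⟫_𝕜 = ⟪x, y⟫_𝕜 := by
  have hV {y' : E} (hy' : y' ∈ Vᗮ) : ⟪x - V.starProjection x, y'⟫_𝕜 = ⟪x, y'⟫_𝕜 := by
    rw [inner_sub_left, hy' _ (V.starProjection_apply_mem x), sub_zero]
  have hmem : x - V.starProjection x ∈ Vᗮ ⊓ T :=
    ⟨V.sub_starProjection_mem_orthogonal x, T.sub_mem hx (hVT (V.starProjection_apply_mem x))⟩
  rw [← hV ((Vᗮ ⊓ T).starProjection_apply_mem y).1, ← hV hy,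
    ← Submodule.inner_starProjection_left_eq_right, Submodule.starProjection_eq_self_iff.2 hmem]

lemma norm_sub_inner_smul_sq {v : E} (hv : ‖v‖ = 1) (y : E) :
    ‖y - ⟪v, y⟫_𝕜 • v‖ ^ 2 = ‖y‖ ^ 2 - ‖⟪v, y⟫_𝕜‖ ^ 2 := by
  have := Submodule.norm_sq_eq_add_norm_sq_starProjection y (𝕜 ∙ v)
  rw [Submodule.starProjection_orthogonal_val, Submodule.starProjection_unit_singleton 𝕜 hv,
    norm_smul, hv, mul_one] at this
  linarith

lemma sum_norm_inner_sq_eq_norm_starProjection_sq {κ : Type*} [Fintype κ] {U : Submodule 𝕜 E}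
    [U.HasOrthogonalProjection] (b : OrthonormalBasis κ 𝕜 U) (y : E) :
    ∑ j, ‖⟪(b j : E), y⟫_𝕜‖ ^ 2 = ‖U.starProjection y‖ ^ 2 := by
  rw [Submodule.starProjection_apply, Submodule.norm_coe, ← b.sum_sq_norm_inner_right]
  simp only [Submodule.inner_orthogonalProjectionOnto_eq_of_mem_left]

lemma finrank_inf_orthogonal_singleton_lt {V : Submodule 𝕜 E} [FiniteDimensional 𝕜 V] {w : E}
    (hw : w ∈ V) (hw0 : w ≠ 0) : finrank 𝕜 (V ⊓ (𝕜 ∙ w)ᗮ : Submodule 𝕜 E) < finrank 𝕜 V := by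
  refine Submodule.finrank_lt_finrank_of_lt (lt_of_le_of_ne inf_le_left fun heq ↦ hw0 ?_)
  exact inner_self_eq_zero.1 (Submodule.mem_orthogonal_singleton_iff_inner_right.1 (heq.ge hw).2)

lemma finrank_familySpan_exchange_le {ι : Type*} [Finite ι] {h : ι → E} {w : E}
    (hw : w ∈ familySpan 𝕜 h) (hw1 : ‖w‖ = 1) (v : E) (c : ι → 𝕜) :
    finrank 𝕜 (familySpan 𝕜 fun i ↦ h i - ⟪w, h i⟫_𝕜 • w + c i • v) ≤
      finrank 𝕜 (familySpan 𝕜 h) := by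
  set V := familySpan 𝕜 h
  have hle : (familySpan 𝕜 fun i ↦ h i - ⟪w, h i⟫_𝕜 • w + c i • v) ≤ (V ⊓ (𝕜 ∙ w)ᗮ) ⊔ 𝕜 ∙ v := by
    refine familySpan_le_iff.2 fun i ↦ Submodule.add_mem_sup ⟨?_, ?_⟩
      (Submodule.smul_mem _ _ (Submodule.mem_span_singleton_self v))
    · exact V.sub_mem (mem_familySpan h i) (V.smul_mem _ hw)
    · rw [SetLike.mem_coe, Submodule.mem_orthogonal_singleton_iff_inner_right, inner_sub_right,
        inner_smul_right, inner_self_eq_norm_sq_to_K, hw1, RCLike.ofReal_one, one_pow, mul_one,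
        sub_self]
  have hw0 : w ≠ 0 := norm_ne_zero_iff.1 (hw1 ▸ one_ne_zero)
  calc finrank 𝕜 (familySpan 𝕜 fun i ↦ h i - ⟪w, h i⟫_𝕜 • w + c i • v)
      ≤ finrank 𝕜 ((V ⊓ (𝕜 ∙ w)ᗮ) ⊔ 𝕜 ∙ v : Submodule 𝕜 E) := Submodule.finrank_mono hle
    _ ≤ finrank 𝕜 (V ⊓ (𝕜 ∙ w)ᗮ : Submodule 𝕜 E) + 1 := finrank_sup_span_singleton_le _ v
    _ ≤ finrank 𝕜 V := finrank_inf_orthogonal_singleton_lt hw hw0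

end Subspaces

section Families

variable {𝕜 E ι : Type*} [RCLike 𝕜] [NormedAddCommGroup E] [InnerProductSpace 𝕜 E]

/-- The pointwise orthogonal projection of a family of vectors to a subspace. Families are elements
of `PiLp 2`, so that a matrix with its Frobenius norm is the family of its rows. -/
noncomputable def projFamily (U : Submodule 𝕜 E) [U.HasOrthogonalProjection]
    (y : PiLp 2 fun _ : ι ↦ E) : PiLp 2 fun _ : ι ↦ E :=
  toLp 2 fun i ↦ U.starProjection (y i)

variable [Fintype ι]

variable (𝕜) in
/-- The energy of a family of vectors along `v`: the squared norm of its coefficients on `v`. -/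
noncomputable def directionalEnergy (y : PiLp 2 fun _ : ι ↦ E) (v : E) : ℝ :=
  ∑ i, ‖⟪v, y i⟫_𝕜‖ ^ 2

variable (𝕜) in
/-- `h` is a best approximation of the family `z` among the families spanning a subspace of
dimension at most `s`; for the rows of a matrix this is a best rank-`s` approximation. -/
structure IsBestFamilyApprox (s : ℕ) (z h : PiLp 2 fun _ : ι ↦ E) : Prop where
  finrank_le : finrank 𝕜 (familySpan 𝕜 h) ≤ s
  norm_sub_le (w : PiLp 2 fun _ : ι ↦ E) (hw : finrank 𝕜 (familySpan 𝕜 w) ≤ s) : ‖z - h‖ ≤ ‖z - w‖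

lemma norm_projFamily_le (U : Submodule 𝕜 E) [U.HasOrthogonalProjection]
    (y : PiLp 2 fun _ : ι ↦ E) : ‖projFamily U y‖ ≤ ‖y‖ := by
  rw [← sq_le_sq₀ (norm_nonneg _) (norm_nonneg _), PiLp.norm_sq_eq_of_L2, PiLp.norm_sq_eq_of_L2]
  gcongr with i
  exact U.norm_starProjection_apply_le (y i)

lemma norm_projFamily_sq_eq_sum_directionalEnergy {κ : Type*} [Fintype κ] {U : Submodule 𝕜 E}
    [U.HasOrthogonalProjection] (b : OrthonormalBasis κ 𝕜 U) (y : PiLp 2 fun _ : ι ↦ E) :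
    ‖projFamily U y‖ ^ 2 = ∑ j, directionalEnergy 𝕜 y (b j) := by
  simp only [directionalEnergy]
  rw [Finset.sum_comm, PiLp.norm_sq_eq_of_L2]
  simp only [sum_norm_inner_sq_eq_norm_starProjection_sq, projFamily]

lemma finrank_mul_norm_projFamily_sq_le {K W : Submodule 𝕜 E} [FiniteDimensional 𝕜 K]
    [FiniteDimensional 𝕜 W] {y h : PiLp 2 fun _ : ι ↦ E}
    (hKW : ∀ v ∈ K, ‖v‖ = 1 → ∀ w ∈ W, ‖w‖ = 1 →
      directionalEnergy 𝕜 y v ≤ directionalEnergy 𝕜 h w) :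
    finrank 𝕜 W * ‖projFamily K y‖ ^ 2 ≤ finrank 𝕜 K * ‖projFamily W h‖ ^ 2 := by
  let bK := stdOrthonormalBasis 𝕜 K
  let bW := stdOrthonormalBasis 𝕜 W
  rw [norm_projFamily_sq_eq_sum_directionalEnergy bK,
    norm_projFamily_sq_eq_sum_directionalEnergy bW]
  calc finrank 𝕜 W * ∑ j, directionalEnergy 𝕜 y (bK j)
      = ∑ j, ∑ _l : Fin (finrank 𝕜 W), directionalEnergy 𝕜 y (bK j) := by
        simp [Finset.mul_sum]
    _ ≤ ∑ _j : Fin (finrank 𝕜 K), ∑ l, directionalEnergy 𝕜 h (bW l) :=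
        Finset.sum_le_sum fun j _ ↦ Finset.sum_le_sum fun l _ ↦
          hKW _ (bK j).2 (bK.orthonormal.1 j) _ (bW l).2 (bW.orthonormal.1 l)
    _ = finrank 𝕜 K * ∑ l, directionalEnergy 𝕜 h (bW l) := by simp

lemma norm_sub_update_sq [DecidableEq ι] (z h : PiLp 2 fun _ : ι ↦ E) (i : ι) (w : E) :
    ‖z - toLp 2 (Function.update h i w)‖ ^ 2 = ‖z - h‖ ^ 2 - ‖z i - h i‖ ^ 2 + ‖z i - w‖ ^ 2 := by
  have hoff : ∑ j ∈ {i}ᶜ, ‖(z - toLp 2 (Function.update h i w)) j‖ ^ 2 =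
      ∑ j ∈ {i}ᶜ, ‖(z - h) j‖ ^ 2 := by
    refine Finset.sum_congr rfl fun j hj ↦ ?_
    have hji : j ≠ i := by simpa using hj
    simp [hji]
  rw [PiLp.norm_sq_eq_of_L2, PiLp.norm_sq_eq_of_L2, Fintype.sum_eq_add_sum_compl i,
    Fintype.sum_eq_add_sum_compl i fun j ↦ ‖(z - h) j‖ ^ 2, hoff]
  simp only [PiLp.sub_apply, Function.update_self]
  ring

namespace IsBestFamilyApprox

variable {s : ℕ} {x z h : PiLp 2 fun _ : ι ↦ E}

lemma norm_sub_apply_le [DecidableEq ι] (hh : IsBestFamilyApprox 𝕜 s z h) {i : ι} {w : E}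
    (hw : finrank 𝕜 (familySpan 𝕜 (Function.update h i w)) ≤ s) : ‖z i - h i‖ ≤ ‖z i - w‖ := by
  have := pow_le_pow_left₀ (norm_nonneg _) (hh.norm_sub_le (toLp 2 (Function.update h i w)) hw) 2
  rw [norm_sub_update_sq] at this
  exact le_of_sq_le_sq (by linarith) (norm_nonneg _)

lemma sub_mem_orthogonal (hh : IsBestFamilyApprox 𝕜 s z h) (i : ι) :
    (z - h) i ∈ (familySpan 𝕜 h)ᗮ := by
  classical
  set V := familySpan 𝕜 h
  have hmin (w : V) : ‖z i - h i‖ ≤ ‖z i - w‖ := by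
    refine hh.norm_sub_apply_le (le_trans (Submodule.finrank_mono ?_) hh.finrank_le)
    have hw : 𝕜 ∙ (w : E) ≤ V := (Submodule.span_singleton_le_iff_mem _ V).2 w.2
    exact (familySpan_update_le h i w).trans (sup_le le_rfl hw)
  rw [Submodule.mem_orthogonal']
  refine (V.norm_eq_iInf_iff_inner_eq_zero (mem_familySpan h i)).1 (le_antisymm (le_ciInf hmin) ?_)
  exact ciInf_le ⟨0, Set.forall_mem_range.2 fun _ ↦ norm_nonneg _⟩ (⟨h i, mem_familySpan h i⟩ : V)

lemma eq_of_finrank_lt (hh : IsBestFamilyApprox 𝕜 s z h)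
    (hlt : finrank 𝕜 (familySpan 𝕜 h) < s) : h = z := by
  classical
  ext i
  have := hh.norm_sub_apply_le (i := i) (w := z i) <|
    (Submodule.finrank_mono (familySpan_update_le h i (z i))).trans <|
      (finrank_sup_span_singleton_le _ (z i)).trans hlt
  rw [sub_self, norm_zero, norm_le_zero_iff, sub_eq_zero] at this
  exact this.symm

lemma directionalEnergy_sub_le (hh : IsBestFamilyApprox 𝕜 s z h) {v w : E}
    (hv : v ∈ (familySpan 𝕜 h)ᗮ) (hv1 : ‖v‖ = 1)
    (hw : w ∈ familySpan 𝕜 h) (hw1 : ‖w‖ = 1) :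
    directionalEnergy 𝕜 (z - h) v ≤ directionalEnergy 𝕜 h w := by
  let u : PiLp 2 fun _ : ι ↦ E :=
    toLp 2 fun i ↦ h i - ⟪w, h i⟫_𝕜 • w + ⟪v, (z - h) i⟫_𝕜 • v
  have hu : ‖z - u‖ ^ 2 =
      ‖z - h‖ ^ 2 - directionalEnergy 𝕜 (z - h) v + directionalEnergy 𝕜 h w := by
    simp only [PiLp.norm_sq_eq_of_L2, directionalEnergy, ← Finset.sum_sub_distrib,
      ← Finset.sum_add_distrib]
    refine Finset.sum_congr rfl fun i _ ↦ ?_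
    have hzu : (z - u) i =
        ((z - h) i - ⟪v, (z - h) i⟫_𝕜 • v) + ⟪w, h i⟫_𝕜 • w := by
      simp only [u, PiLp.sub_apply]; abel
    have hort : ⟪(z - h) i - ⟪v, (z - h) i⟫_𝕜 • v, ⟪w, h i⟫_𝕜 • w⟫_𝕜 = 0 :=
      Submodule.inner_left_of_mem_orthogonal (Submodule.smul_mem _ _ hw)
        (Submodule.sub_mem _ (hh.sub_mem_orthogonal i) (Submodule.smul_mem _ _ hv))
    rw [hzu, sq, norm_add_sq_eq_norm_sq_add_norm_sq_of_inner_eq_zero _ _ hort, ← sq, ← sq,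
      norm_sub_inner_smul_sq hv1, norm_smul, hw1, mul_one]
  have hle : ‖z - h‖ ≤ ‖z - u‖ :=
    hh.norm_sub_le u ((finrank_familySpan_exchange_le hw hw1 v _).trans hh.finrank_le)
  have := pow_le_pow_left₀ (norm_nonneg _) hle 2
  linarith

lemma norm_sub_le_norm_sub_add_norm_projFamily (hh : IsBestFamilyApprox 𝕜 s z h) :
    ‖x - h‖ ≤ ‖x - z‖ +
      ‖projFamily ((familySpan 𝕜 h)ᗮ ⊓ (familySpan 𝕜 h ⊔ familySpan 𝕜 x)) (z - h)‖ := by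
  set V := familySpan 𝕜 h
  set p := projFamily (Vᗮ ⊓ (V ⊔ familySpan 𝕜 x)) (z - h)
  have hp : ⟪x - h, z - h⟫_𝕜 = ⟪x - h, p⟫_𝕜 := by
    simp only [PiLp.inner_apply]
    refine Finset.sum_congr rfl fun i _ ↦
      (inner_starProjection_orthogonal_inf_eq le_sup_left ?_ (hh.sub_mem_orthogonal i)).symm
    exact Submodule.sub_mem _ (Submodule.mem_sup_right (mem_familySpan x i))
      (Submodule.mem_sup_left (mem_familySpan h i))
  have hsq : ‖x - h‖ ^ 2 ≤ ‖x - h‖ * (‖x - z‖ + ‖p‖) := by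
    calc ‖x - h‖ ^ 2 = RCLike.re ⟪x - h, (x - z) + (z - h)⟫_𝕜 := by
          rw [sub_add_sub_cancel, inner_self_eq_norm_sq]
      _ = RCLike.re ⟪x - h, x - z⟫_𝕜 + RCLike.re ⟪x - h, p⟫_𝕜 := by
          rw [inner_add_right, map_add, hp]
      _ ≤ ‖x - h‖ * ‖x - z‖ + ‖x - h‖ * ‖p‖ :=
          add_le_add (re_inner_le_norm _ _) (re_inner_le_norm _ _)
      _ = ‖x - h‖ * (‖x - z‖ + ‖p‖) := (mul_add _ _ _).symm
  rcases (norm_nonneg (x - h)).eq_or_lt with hzero | hpos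
  · rw [← hzero]; positivity
  · exact le_of_mul_le_mul_left (sq ‖x - h‖ ▸ hsq) hpos

lemma norm_projFamily_inf_orthogonal_le_norm_sub (hh : IsBestFamilyApprox 𝕜 s z h) :
    ‖projFamily (familySpan 𝕜 h ⊓ (familySpan 𝕜 x)ᗮ) h‖ ≤ ‖x - z‖ := by
  set W := familySpan 𝕜 h ⊓ (familySpan 𝕜 x)ᗮ
  have heq : projFamily W h = projFamily W (z - x) := by
    ext i
    have hzh : W.starProjection ((z - h) i) = 0 := W.starProjection_apply_eq_zero_iff.2 <|
      Submodule.orthogonal_le inf_le_left (hh.sub_mem_orthogonal i)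
    have hx : W.starProjection (x i) = 0 := W.starProjection_apply_eq_zero_iff.2 <|
      Submodule.orthogonal_le inf_le_right <|
        Submodule.le_orthogonal_orthogonal _ (mem_familySpan x i)
    rw [PiLp.sub_apply, map_sub, sub_eq_zero] at hzh
    simp only [projFamily, PiLp.sub_apply, map_sub, hzh, hx, sub_zero]
  rw [heq, norm_sub_rev]
  exact norm_projFamily_le W (z - x)

lemma sub_mul_norm_projFamily_sq_le {r : ℕ} (hh : IsBestFamilyApprox 𝕜 s z h)
    (hx : finrank 𝕜 (familySpan 𝕜 x) ≤ r) :
    ((s : ℝ) - r) *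
        ‖projFamily ((familySpan 𝕜 h)ᗮ ⊓ (familySpan 𝕜 h ⊔ familySpan 𝕜 x)) (z - h)‖ ^ 2 ≤
      r * ‖x - z‖ ^ 2 := by
  set V := familySpan 𝕜 h
  set S := familySpan 𝕜 x
  set K := Vᗮ ⊓ (V ⊔ S)
  set W := V ⊓ Sᗮ
  rcases hh.finrank_le.lt_or_eq with hlt | hs
  · have : ‖projFamily K (z - h)‖ ≤ 0 := by
      simpa [hh.eq_of_finrank_lt hlt] using norm_projFamily_le K (z - h)
    rw [norm_le_zero_iff.1 this, norm_zero, zero_pow two_ne_zero, mul_zero]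
    positivity
  · have hK : finrank 𝕜 K ≤ r := (finrank_orthogonal_inf_sup_le V S).trans hx
    have hW : (s : ℝ) - r ≤ finrank 𝕜 W := by
      have : s ≤ finrank 𝕜 W + r := hs ▸
        (finrank_le_finrank_inf_orthogonal_add_finrank V S).trans (by gcongr)
      rw [sub_le_iff_le_add]
      exact_mod_cast this
    calc ((s : ℝ) - r) * ‖projFamily K (z - h)‖ ^ 2
        ≤ finrank 𝕜 W * ‖projFamily K (z - h)‖ ^ 2 := by gcongr
      _ ≤ finrank 𝕜 K * ‖projFamily W h‖ ^ 2 :=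
          finrank_mul_norm_projFamily_sq_le fun v hv hv1 w hw hw1 ↦
            hh.directionalEnergy_sub_le hv.1 hv1 hw.1 hw1
      _ ≤ r * ‖x - z‖ ^ 2 := by
          gcongr
          exact hh.norm_projFamily_inf_orthogonal_le_norm_sub

end IsBestFamilyApprox

theorem stmt3_general {r s : ℕ} {x z h : PiLp 2 fun _ : ι ↦ E} (hs : 0 < s) (hrs : r ≤ s)
    (hx : finrank 𝕜 (familySpan 𝕜 x) ≤ r) (hh : IsBestFamilyApprox 𝕜 s z h) :
    ‖x - h‖ ≤ (1 + √(3 * r / (s + r))) * ‖x - z‖ := by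
  have htri := hh.norm_sub_le_norm_sub_add_norm_projFamily (x := x)
  have henergy := hh.sub_mul_norm_projFamily_sq_le hx
  set K := (familySpan 𝕜 h)ᗮ ⊓ (familySpan 𝕜 h ⊔ familySpan 𝕜 x)
  set g := ‖projFamily K (z - h)‖
  have hg : g ≤ ‖x - z‖ := by
    rw [norm_sub_rev x z]
    exact (norm_projFamily_le K (z - h)).trans (hh.norm_sub_le x (hx.trans hrs))
  have hgsq : g ^ 2 ≤ 3 * r / (s + r) * ‖x - z‖ ^ 2 := by
    have : (0 : ℝ) < s := by exact_mod_cast hs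
    rw [div_mul_eq_mul_div, le_div_iff₀ (by positivity)]
    calc g ^ 2 * (s + r) = (s - r) * g ^ 2 + 2 * r * g ^ 2 := by ring
      _ ≤ r * ‖x - z‖ ^ 2 + 2 * r * ‖x - z‖ ^ 2 := by gcongr
      _ = 3 * r * ‖x - z‖ ^ 2 := by ring
  calc ‖x - h‖ ≤ ‖x - z‖ + g := htri
    _ ≤ ‖x - z‖ + √(3 * r / (s + r) * ‖x - z‖ ^ 2) := by gcongr; exact Real.le_sqrt_of_sq_le hgsq
    _ = (1 + √(3 * r / (s + r))) * ‖x - z‖ := by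
        rw [Real.sqrt_mul (by positivity), Real.sqrt_sq (norm_nonneg _)]; ring

end Families

section Matrix

variable {N₁ N₂ : ℕ}

/-- The family of rows of a matrix; its `PiLp 2` norm is the Frobenius norm of the matrix. -/
noncomputable def rowFamily (A : Matrix (Fin N₁) (Fin N₂) ℝ) :
    PiLp 2 fun _ : Fin N₁ ↦ EuclideanSpace ℝ (Fin N₂) :=
  toLp 2 fun i ↦ toLp 2 (A i)

lemma frobNorm_sub_eq_norm_rowFamily_sub (A B : Matrix (Fin N₁) (Fin N₂) ℝ) :
    frobNorm (A - B) = ‖rowFamily A - rowFamily B‖ := by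
  rw [frobNorm, PiLp.norm_eq_of_L2]
  simp only [EuclideanSpace.real_norm_sq_eq]
  rfl

lemma finrank_familySpan_rowFamily (A : Matrix (Fin N₁) (Fin N₂) ℝ) :
    finrank ℝ (familySpan ℝ (rowFamily A)) = A.rank := by
  rw [Matrix.rank_eq_finrank_span_row,
    ← (WithLp.linearEquiv 2 ℝ (Fin N₂ → ℝ)).symm.finrank_map_eq, Submodule.map_span,
    ← Set.range_comp]
  rfl

lemma IsBestRankApprox.isBestFamilyApprox_rowFamily {k : ℕ} {Z H : Matrix (Fin N₁) (Fin N₂) ℝ}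
    (hH : IsBestRankApprox k Z H) : IsBestFamilyApprox ℝ k (rowFamily Z) (rowFamily H) where
  finrank_le := (finrank_familySpan_rowFamily H).trans_le hH.1
  norm_sub_le w hw := by
    have hw' : rowFamily (Matrix.of fun i j ↦ w i j) = w := rfl
    rw [← hw', finrank_familySpan_rowFamily] at hw
    rw [← hw', ← frobNorm_sub_eq_norm_rowFamily_sub, ← frobNorm_sub_eq_norm_rowFamily_sub]
    exact hH.2 _ hw

end Matrix

/-- Proposition 1 (ShenLi-type bound): if rank(X) ≤ r and H is a best rank-s approximation
of Z, with 1 ≤ r ≤ s and s + 2r ≤ min{N₁, N₂}, then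
‖X − H‖_F ≤ (1 + √(8r/(s+r)))·‖X − Z‖_F. -/
theorem stmt3 {N₁ N₂ : ℕ} (X Z H : Matrix (Fin N₁) (Fin N₂) ℝ) (r s : ℕ)
    (hr : 1 ≤ r) (hrs : r ≤ s) (hdim : s + 2 * r ≤ min N₁ N₂)
    (hX : X.rank ≤ r) (hH : IsBestRankApprox s Z H) :
    frobNorm (X - H) ≤ (1 + Real.sqrt (8 * (r : ℝ) / ((s : ℝ) + (r : ℝ)))) * frobNorm (X - Z) := by
  rw [frobNorm_sub_eq_norm_rowFamily_sub, frobNorm_sub_eq_norm_rowFamily_sub]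
  refine (stmt3_general (by omega) hrs ((finrank_familySpan_rowFamily X).trans_le hX)
    hH.isBestFamilyApprox_rowFamily).trans ?_
  gcongr
  norm_num
end
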